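/- arXiv:1605.03905 — 7 statements merged into one kernel-verified Lean document; each statement's English description precedes it below -/
import Mathlib

section
/- Let C ∈ 𝒢 be a measurable set, and for each q ∈ ℚ with q ≥ 0 fix a version z_q of the conditional expectation E[1_C | F_q]. Then P-almost every ω ∈ C satisfies inf_{q ∈ ℚ, q ≥ 0} z_q(ω) > 0. (This is the content of the claim that the martingale z_t = P(C | F_t) and its left limits are a.s. strictly positive on C.) -/
/-!
The key estimate is a maximal inequality for the martingale `Y t = P[1_C | m t]`: for `ε ≥ 0` and
any countable set of times, `P (C ∩ {∃ t, Y t < ε}) ≤ ε`. For finitely many times, split the event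
`{∃ t, Y t < ε}` according to the first time `t` at which `Y t < ε`; the piece belonging to `t` is
`m t`-measurable, so its intersection with `C` has probability `∫ Y t` over the piece, which is at
most `ε` times the probability of the piece. Adding one latest time after another turns
this into an induction (`measureReal_inter_exists_lt_le`), and continuity from below passes to
countably many times (`measure_inter_exists_lt_le`). Letting `ε = 1 / (n + 1) → 0` shows that the
part of `C` on which `inf Y = 0` is null.
-/


open MeasureTheory MeasurableSpace Set
open scoped NNReal ENNReal symmDiff

noncomputable section

variable {Ω : Type*}

/-- `T` is an `F`-stopping time with values in `[0,∞]`. -/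
def IsStoppingTimeE (F : ℝ≥0 → MeasurableSpace Ω) (T : Ω → ℝ≥0∞) : Prop :=
  ∀ t : ℝ≥0, MeasurableSet[F t] {ω | T ω ≤ (t : ℝ≥0∞)}

/-- The members of the sequence `T` have pairwise disjoint graphs. -/
def DisjointGraphs [MeasurableSpace Ω] (P : Measure Ω) (T : ℕ → Ω → ℝ≥0∞) : Prop :=
  ∀ n m, n ≠ m → P {ω | T n ω = T m ω ∧ T n ω < ∞} = 0

/-- `T` is an exhausting sequence of the random time `τ`. -/
def ExhaustingSeq [MeasurableSpace Ω] (P : Measure Ω) (F : ℝ≥0 → MeasurableSpace Ω)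
    (τ : Ω → ℝ≥0∞) (T : ℕ → Ω → ℝ≥0∞) : Prop :=
  (∀ n, IsStoppingTimeE F (T n)) ∧ DisjointGraphs P T ∧
    (∀ᵐ ω ∂P, τ ω < ∞ → ∃ n, τ ω = T n ω)

/-- `τ` is an `F`-thin time. -/
def IsThinTime [MeasurableSpace Ω] (P : Measure Ω) (F : ℝ≥0 → MeasurableSpace Ω)
    (τ : Ω → ℝ≥0∞) : Prop :=
  ∃ T : ℕ → Ω → ℝ≥0∞, ExhaustingSeq P F τ T

/-- `τ` is an `F`-thick time: it avoids all `F`-stopping times. -/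
def IsThickTime [MeasurableSpace Ω] (P : Measure Ω) (F : ℝ≥0 → MeasurableSpace Ω)
    (τ : Ω → ℝ≥0∞) : Prop :=
  ∀ T : Ω → ℝ≥0∞, IsStoppingTimeE F T → P {ω | τ ω = T ω ∧ τ ω < ∞} = 0

/-- The filtration `F` (of sub-σ-algebras of the ambient σ-algebra) satisfies the
usual conditions: monotone, right-continuous and complete. -/
def UsualConditions [m𝒢 : MeasurableSpace Ω] (P : Measure Ω)
    (F : ℝ≥0 → MeasurableSpace Ω) : Prop :=
  Monotone F ∧ (∀ t, F t ≤ m𝒢) ∧ (∀ t : ℝ≥0, F t = ⨅ u ∈ Set.Ioi t, F u) ∧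
    (∀ s : Set Ω, P s = 0 → MeasurableSet[F 0] s)

/-- The progressive enlargement `F^ρ` of `F` with the random time `ρ`. -/
def progEnlarge (F : ℝ≥0 → MeasurableSpace Ω) (ρ : Ω → ℝ≥0∞) (t : ℝ≥0) :
    MeasurableSpace Ω :=
  ⨅ u ∈ Set.Ioi t, (F u ⊔ MeasurableSpace.generateFrom
    {A : Set Ω | ∃ s : ℝ≥0, s ≤ u ∧ A = {ω | ρ ω ≤ (s : ℝ≥0∞)}})

/-- The σ-algebra `σ(C_n : n ≥ 0)` generated by the partition of a thin time `τ` with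
exhausting sequence `T`, where `C_0 = {τ = ∞}` and `C_n = {τ = T_n < ∞}` for `n ≥ 1`. -/
def partitionSigma (τ : Ω → ℝ≥0∞) (T : ℕ → Ω → ℝ≥0∞) : MeasurableSpace Ω :=
  MeasurableSpace.generateFrom
    ({{ω | τ ω = ∞}} ∪ Set.range fun n => {ω | τ ω = T n ω ∧ τ ω < ∞})

/-- The initial enlargement of `F` with a σ-algebra `𝒞`. -/
def initEnlarge (F : ℝ≥0 → MeasurableSpace Ω) (𝒞 : MeasurableSpace Ω) (t : ℝ≥0) :
    MeasurableSpace Ω :=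
  ⨅ s ∈ Set.Ioi t, (F s ⊔ 𝒞)

/-- `M` is a martingale with respect to the filtration `G` under `P`. -/
def IsMartingaleWrt [MeasurableSpace Ω] (P : Measure Ω) (G : ℝ≥0 → MeasurableSpace Ω)
    (M : ℝ≥0 → Ω → ℝ) : Prop :=
  (∀ t, StronglyMeasurable[G t] (M t)) ∧ (∀ t, Integrable (M t) P) ∧
    ∀ s t : ℝ≥0, s ≤ t → P[M t | G s] =ᵐ[P] M s

/-- `F` is immersed in `G`: every `F`-martingale is a `G`-martingale. -/
def Immersed [MeasurableSpace Ω] (P : Measure Ω) (F G : ℝ≥0 → MeasurableSpace Ω) : Prop :=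
  ∀ M : ℝ≥0 → Ω → ℝ, IsMartingaleWrt P F M → IsMartingaleWrt P G M

/-- The σ-algebra `F_T` of the stopping time `T`. -/
def stoppingSigma [m𝒢 : MeasurableSpace Ω] (F : ℝ≥0 → MeasurableSpace Ω) (T : Ω → ℝ≥0∞)
    (hT : IsStoppingTimeE F T) : MeasurableSpace Ω where
  MeasurableSet' A := MeasurableSet[m𝒢] A ∧
    ∀ t : ℝ≥0, MeasurableSet[F t] (A ∩ {ω | T ω ≤ (t : ℝ≥0∞)})
  measurableSet_empty :=
    ⟨MeasurableSet.empty, fun t => by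
      simp only [Set.empty_inter]
      exact @MeasurableSet.empty Ω (F t)⟩
  measurableSet_compl := by
    rintro A ⟨hA, hA'⟩
    refine ⟨hA.compl, fun t => ?_⟩
    have h : Aᶜ ∩ {ω | T ω ≤ (t : ℝ≥0∞)}
        = {ω | T ω ≤ (t : ℝ≥0∞)} \ (A ∩ {ω | T ω ≤ (t : ℝ≥0∞)}) := by
      ext ω; simp only [Set.mem_inter_iff, Set.mem_compl_iff, Set.mem_diff, Set.mem_setOf_eq]
      tauto
    rw [h]
    exact (hT t).diff (hA' t)
  measurableSet_iUnion := by
    intro f hf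
    refine ⟨MeasurableSet.iUnion fun n => (hf n).1, fun t => ?_⟩
    rw [Set.iUnion_inter]
    exact MeasurableSet.iUnion fun n => (hf n).2 t

/-- `τ` is an `F`-honest time. -/
def IsHonestTime [MeasurableSpace Ω] (P : Measure Ω) (F : ℝ≥0 → MeasurableSpace Ω)
    (τ : Ω → ℝ≥0∞) : Prop :=
  ∀ t : ℝ≥0, 0 < t → ∃ σ : Ω → ℝ≥0∞, Measurable[F t] σ ∧
    ∀ᵐ ω ∂P, τ ω < (t : ℝ≥0∞) → τ ω = σ ω

/-- `(τ₁, τ₂)` is a thin-thick decomposition of the random time `τ`. -/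
def ThinThickDecomp [MeasurableSpace Ω] (P : Measure Ω) (F : ℝ≥0 → MeasurableSpace Ω)
    (τ τ₁ τ₂ : Ω → ℝ≥0∞) : Prop :=
  IsThinTime P F τ₁ ∧ IsThickTime P F τ₂ ∧
    (∀ᵐ ω ∂P, τ ω = min (τ₁ ω) (τ₂ ω)) ∧ (∀ᵐ ω ∂P, max (τ₁ ω) (τ₂ ω) = ∞)


/-- On an `m`-measurable set where `P[1_C | m] < ε`, the set `C` takes up at most the
proportion `ε`. -/
lemma measureReal_inter_le_of_condExp_lt {m m𝒢 : MeasurableSpace Ω} (hm : m ≤ m𝒢)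
    (P : Measure Ω) [IsProbabilityMeasure P] {C : Set Ω} (hC : MeasurableSet C) {ε : ℝ}
    {D : Set Ω} (hD : MeasurableSet[m] D)
    (hlt : ∀ ω ∈ D, (P[C.indicator (fun _ => (1 : ℝ)) | m]) ω < ε) :
    P.real (C ∩ D) ≤ ε * P.real D := by
  have hint : Integrable (C.indicator (fun _ => (1 : ℝ))) P :=
    (integrable_const 1).indicator hC
  calc P.real (C ∩ D) = ∫ ω in D, C.indicator (fun _ => (1 : ℝ)) ω ∂P := by
        rw [setIntegral_indicator hC, setIntegral_const, inter_comm]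
        simp
    _ = ∫ ω in D, (P[C.indicator (fun _ => (1 : ℝ)) | m]) ω ∂P :=
        (setIntegral_condExp hm hint hD).symm
    _ ≤ ∫ _ in D, ε ∂P :=
        setIntegral_mono_on integrable_condExp.integrableOn (integrable_const ε).integrableOn
          (hm _ hD) fun ω hω => (hlt ω hω).le
    _ = ε * P.real D := by
        rw [setIntegral_const, smul_eq_mul, mul_comm]

/-- Maximal inequality for finitely many times. The factor `P.real {∃ t ∈ S, Y t < ε}` on the right
is what makes the induction on the latest time work. -/
lemma measureReal_inter_exists_lt_le {ι : Type*} [LinearOrder ι] {m𝒢 : MeasurableSpace Ω}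
    (P : Measure Ω) [IsProbabilityMeasure P] {m : ι → MeasurableSpace Ω} (hmono : Monotone m)
    (hm : ∀ i, m i ≤ m𝒢) {C : Set Ω} (hC : MeasurableSet C) (ε : ℝ) (S : Finset ι) :
    P.real (C ∩ {ω | ∃ i ∈ S, (P[C.indicator (fun _ => (1 : ℝ)) | m i]) ω < ε}) ≤
      ε * P.real {ω | ∃ i ∈ S, (P[C.indicator (fun _ => (1 : ℝ)) | m i]) ω < ε} := by
  have hlt : ∀ i, MeasurableSet[m i] {ω | (P[C.indicator (fun _ => (1 : ℝ)) | m i]) ω < ε} :=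
    fun i => measurableSet_lt stronglyMeasurable_condExp.measurable measurable_const
  induction S using Finset.induction_on_max with
  | empty => simp
  | insert t S hS ih =>
    set A := {ω | ∃ i ∈ S, (P[C.indicator (fun _ => (1 : ℝ)) | m i]) ω < ε} with hA
    set B := {ω | (P[C.indicator (fun _ => (1 : ℝ)) | m t]) ω < ε} with hB
    have hAm : MeasurableSet[m t] A := by
      have : A = ⋃ i ∈ S, {ω | (P[C.indicator (fun _ => (1 : ℝ)) | m i]) ω < ε} := by
        ext ω
        simp [hA]
      rw [this]
      exact S.measurableSet_biUnion fun i hi => hmono (hS i hi).le _ (hlt i)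
    have hDm : MeasurableSet[m t] (B \ A) := (hlt t).diff hAm
    have hU : {ω | ∃ i ∈ insert t S, (P[C.indicator (fun _ => (1 : ℝ)) | m i]) ω < ε}
        = A ∪ B \ A := by
      rw [union_sdiff_self]
      ext ω
      simp [hA, hB, or_comm]
    have hdisj : Disjoint A (B \ A) := disjoint_sdiff_right
    rw [hU, inter_union_distrib_left,
      measureReal_union (hdisj.mono inter_subset_right inter_subset_right)
        (hC.inter (hm t _ hDm)),
      measureReal_union hdisj (hm t _ hDm), mul_add]
    exact add_le_add ih (measureReal_inter_le_of_condExp_lt (hm t) P hC hDm fun ω hω => hω.1)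

lemma measure_inter_exists_lt_le {ι : Type*} [LinearOrder ι] [Countable ι]
    {m𝒢 : MeasurableSpace Ω} (P : Measure Ω) [IsProbabilityMeasure P]
    {m : ι → MeasurableSpace Ω} (hmono : Monotone m)
    (hm : ∀ i, m i ≤ m𝒢) {C : Set Ω} (hC : MeasurableSet C) {ε : ℝ} (hε : 0 ≤ ε) :
    P (C ∩ {ω | ∃ i, (P[C.indicator (fun _ => (1 : ℝ)) | m i]) ω < ε}) ≤ ENNReal.ofReal ε := by
  have hU : C ∩ {ω | ∃ i, (P[C.indicator (fun _ => (1 : ℝ)) | m i]) ω < ε} =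
      ⋃ S : Finset ι, C ∩ {ω | ∃ i ∈ S, (P[C.indicator (fun _ => (1 : ℝ)) | m i]) ω < ε} := by
    rw [← inter_iUnion]
    congr 1
    ext ω
    simp only [mem_ofPred_eq, mem_iUnion]
    exact ⟨fun ⟨i, hi⟩ => ⟨{i}, i, by simp, hi⟩, fun ⟨_, i, _, hi⟩ => ⟨i, hi⟩⟩
  have hdir : Monotone fun S : Finset ι =>
      C ∩ {ω | ∃ i ∈ S, (P[C.indicator (fun _ => (1 : ℝ)) | m i]) ω < ε} :=
    fun S T hST => inter_subset_inter_right _ fun ω ⟨i, hi, h⟩ => ⟨i, hST hi, h⟩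
  rw [hU, hdir.directed_le.measure_iUnion]
  refine iSup_le fun S => ?_
  rw [← ofReal_measureReal]
  refine ENNReal.ofReal_le_ofReal ((measureReal_inter_exists_lt_le P hmono hm hC ε S).trans ?_)
  exact mul_le_of_le_one_right hε measureReal_le_one

theorem condexp_pos_on_set
    [m𝒢 : MeasurableSpace Ω] (P : Measure Ω) [IsProbabilityMeasure P]
    (F : ℝ≥0 → MeasurableSpace Ω) (hUC : UsualConditions P F)
    (C : Set Ω) (hC : MeasurableSet C)
    (z : ℚ → Ω → ℝ)
    (hz : ∀ q : ℚ, 0 ≤ q →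
      z q =ᵐ[P] P[C.indicator (fun _ => (1 : ℝ)) | F (Real.toNNReal (q : ℝ))]) :
    ∀ᵐ ω ∂P, ω ∈ C → 0 < ⨅ q : {q : ℚ // 0 ≤ q}, z q.val ω := by
  obtain ⟨hF, hle, -, -⟩ := hUC
  let m : {q : ℚ // 0 ≤ q} → MeasurableSpace Ω := fun q => F (Real.toNNReal (q.val : ℝ))
  have hmono : Monotone m := fun p q hpq =>
    hF (Real.toNNReal_mono (by exact_mod_cast hpq))
  have hnull : P (⋂ n : ℕ, C ∩ {ω | ∃ q, (P[C.indicator (fun _ => (1 : ℝ)) | m q]) ω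
      < 1 / ((n : ℝ) + 1)}) = 0 := by
    have hlim : Filter.Tendsto (fun n : ℕ => ENNReal.ofReal (1 / ((n : ℝ) + 1))) Filter.atTop
        (nhds 0) := by
      simpa using ENNReal.tendsto_ofReal tendsto_one_div_add_atTop_nhds_zero_nat
    refine le_antisymm (ge_of_tendsto' hlim fun n => ?_) zero_le
    exact (measure_mono (iInter_subset _ n)).trans
      (measure_inter_exists_lt_le P hmono (fun q => hle _) hC (by positivity))
  have hz' : ∀ᵐ ω ∂P, ∀ q : {q : ℚ // 0 ≤ q},
      z q.val ω = (P[C.indicator (fun _ => (1 : ℝ)) | m q]) ω :=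
    ae_all_iff.2 fun q => hz q.val q.2
  filter_upwards [hz', measure_eq_zero_iff_ae_notMem.1 hnull] with ω hω hnot hωC
  simp only [mem_iInter, mem_inter_iff, hωC, true_and, mem_ofPred_eq, not_forall, not_exists,
    not_lt] at hnot
  obtain ⟨n, hn⟩ := hnot
  have : Nonempty {q : ℚ // 0 ≤ q} := ⟨⟨0, le_rfl⟩⟩
  exact lt_of_lt_of_le (by positivity : (0 : ℝ) < 1 / ((n : ℝ) + 1))
    (le_ciInf fun q => (hω q).symm ▸ hn q)

end
end

section
/- Let τ be an F-thin time with exhausting sequence (T_n)_{n≥1} and partition (C_n)_{n≥0}, where C_0 := {τ = ∞} and C_n := {τ = T_n < ∞} for n ≥ 1. Then for every n ≥ 1, every t ≥ 0 and every integrable 𝒢-measurable random variable X, one has P-almost everywhere on the set {T_n ≤ t} ∩ C_n: E[X | F^τ_t] · E[1_{C_n} | F_t] = E[X · 1_{C_n} | F_t]. (Since E[1_{C_n} | F_t] > 0 a.s. on C_n, this is equivalent to E[X | F^τ_t] = E[X 1_{C_n} | F_t] / E[1_{C_n} | F_t] a.e. on {T_n ≤ t} ∩ C_n.) -/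
/-!
Fix `n`, `t` and put `C = {τ = T n < ∞}`, `S = {T n ≤ t}`, `A = S ∩ C`. The result rests on the fact
that the progressively enlarged σ-algebra `F^τ_t` and `F_t` have the same trace on `A`. Indeed
`τ = T n` on `A`, so for `u > t` every generator `{τ ≤ s}`, `s ≤ u`, of the enlargement agrees on
`A` with `{T n ≤ s} ∈ F_u` (`exists_trace_of_measurableSet_sup`); letting `u ↓ t` and taking the
limsup of the resulting sets gives a set in `F_t` by right-continuity
(`exists_trace_of_measurableSet_progEnlarge`). Moreover `A ∈ F^τ_t` (`measurableSet_progEnlarge`).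

Write `p = E[1_C | F_t]` and `V = E[X 1_C | F_t]`. For `B ∈ F^τ_t` choose `D ∈ F_t` with
`B ∩ A = D ∩ A`. Since `D ∩ S ∈ F_t`, conditioning on `F_t` twice gives
`∫_{B ∩ A} V = ∫_{D ∩ S} V 1_C = ∫_{D ∩ S} V p = ∫_{D ∩ S} X 1_C p = ∫_{B ∩ A} X p`.
Hence `1_A V` is the conditional expectation of `1_A p X` given `F^τ_t`, which is
`1_A p E[X | F^τ_t]` because `1_A p` is `F^τ_t`-measurable (`condExp_mul_eq_on_of_trace`).
-/

open MeasureTheory MeasurableSpace Set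
open scoped NNReal ENNReal symmDiff

noncomputable section

variable {Ω : Type*}

/-- Conditional expectation is symmetric, in the weak form needed for a bounded `g` and an
integrable `f`: both sides equal `∫_E μ[f | m] μ[g | m]`. -/
lemma setIntegral_condExp_mul_comm {m m₀ : MeasurableSpace Ω} {μ : Measure Ω}
    [IsFiniteMeasure μ] (hm : m ≤ m₀) {f g : Ω → ℝ} (hf : Integrable f μ) (hg : Integrable g μ)
    (hg1 : ∀ ω, |g ω| ≤ 1) {E : Set Ω} (hE : MeasurableSet[m] E) :
    ∫ ω in E, (μ[f | m]) ω * g ω ∂μ = ∫ ω in E, (μ[g | m]) ω * f ω ∂μ := by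
  have hb : ∀ᵐ ω ∂μ, ‖(μ[g | m]) ω‖ ≤ 1 := by
    exact ae_bdd_abs_condExp_of_ae_bdd_abs (.of_forall hg1)
  have h1 : Integrable (μ[f | m] * g) μ :=
    integrable_condExp.mul_bdd (c := 1) hg.aestronglyMeasurable (.of_forall fun ω => hg1 ω)
  have h2 : Integrable (μ[g | m] * f) μ :=
    hf.bdd_mul (c := 1) integrable_condExp.aestronglyMeasurable hb
  have e1 := condExp_mul_of_stronglyMeasurable_left
    (stronglyMeasurable_condExp (f := f) (m := m) (μ := μ)) h1 hg
  have e2 := condExp_mul_of_stronglyMeasurable_left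
    (stronglyMeasurable_condExp (f := g) (m := m) (μ := μ)) h2 hf
  calc ∫ ω in E, (μ[f | m]) ω * g ω ∂μ
      = ∫ ω in E, (μ[μ[f | m] * g | m]) ω ∂μ := (setIntegral_condExp hm h1 hE).symm
    _ = ∫ ω in E, (μ[μ[g | m] * f | m]) ω ∂μ := by
      refine setIntegral_congr_ae (hm _ hE) ?_
      filter_upwards [e1, e2] with ω h h' _
      rw [h, h', Pi.mul_apply, Pi.mul_apply, mul_comm]
    _ = ∫ ω in E, (μ[g | m]) ω * f ω ∂μ := setIntegral_condExp hm h2 hE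

/-- The change of σ-algebra formula: if `m ≤ G` have the same trace on `S ∩ C`, where `S` is
`m`-measurable and `S ∩ C` is `G`-measurable, then `E[X | G] E[1_C | m] = E[X 1_C | m]` almost
everywhere on `S ∩ C`. -/
lemma condExp_mul_eq_on_of_trace {m G m₀ : MeasurableSpace Ω} {μ : Measure Ω}
    [IsFiniteMeasure μ] (hmG : m ≤ G) (hG : G ≤ m₀) {S C : Set Ω}
    (hS : MeasurableSet[m] S) (hC : MeasurableSet C) (hA : MeasurableSet[G] (S ∩ C))
    (htr : ∀ B, MeasurableSet[G] B → ∃ D, MeasurableSet[m] D ∧ B ∩ (S ∩ C) = D ∩ (S ∩ C))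
    {X : Ω → ℝ} (hX : Integrable X μ) :
    ∀ᵐ ω ∂μ, ω ∈ S ∩ C →
      (μ[X | G]) ω * (μ[C.indicator (fun _ => (1 : ℝ)) | m]) ω = (μ[C.indicator X | m]) ω := by
  have hm : m ≤ m₀ := hmG.trans hG
  have hAm : MeasurableSet (S ∩ C) := hG _ hA
  set p := μ[C.indicator (fun _ => (1 : ℝ)) | m] with hp
  set V := μ[C.indicator X | m] with hV
  have hg1 : ∀ ω, |C.indicator (fun _ => (1 : ℝ)) ω| ≤ 1 := fun ω => by
    by_cases h : ω ∈ C <;> simp [h]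
  have hgi : Integrable (C.indicator (fun _ => (1 : ℝ))) μ := (integrable_const 1).indicator hC
  have hb : ∀ᵐ ω ∂μ, ‖p ω‖ ≤ 1 := by
    exact ae_bdd_abs_condExp_of_ae_bdd_abs (.of_forall hg1)
  have hpA : StronglyMeasurable[G] ((S ∩ C).indicator p) :=
    ((stronglyMeasurable_condExp (m := m)).mono hmG).indicator hA
  have hpAX : Integrable ((S ∩ C).indicator p * X) μ := by
    refine hX.bdd_mul (c := 1) (hpA.mono hG).aestronglyMeasurable ?_
    filter_upwards [hb] with ω hω
    exact (norm_indicator_le_norm_self _ _).trans hω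
  have hVA : (S ∩ C).indicator V =ᵐ[μ] μ[(S ∩ C).indicator p * X | G] := by
    refine ae_eq_condExp_of_forall_setIntegral_eq hG hpAX
      (fun s _ _ => (integrable_condExp.indicator hAm).integrableOn) (fun B hB _ => ?_)
      (((stronglyMeasurable_condExp (m := m)).mono hmG).indicator hA).aestronglyMeasurable
    obtain ⟨D, hD, hBD⟩ := htr B hB
    -- An integral over `B ∩ (S ∩ C) = D ∩ (S ∩ C)` is one of `f 1_C` over `D ∩ S`.
    have key : ∀ f : Ω → ℝ, ∫ ω in B, (S ∩ C).indicator f ω ∂μ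
        = ∫ ω in D ∩ S, C.indicator f ω ∂μ := fun f => by
      rw [setIntegral_indicator hAm, setIntegral_indicator hC, hBD, inter_assoc]
    have e : (S ∩ C).indicator p * X = (S ∩ C).indicator (fun ω => p ω * X ω) := by
      ext ω; by_cases h : ω ∈ S ∩ C <;>
        simp only [Pi.mul_apply, indicator, h, if_true, if_false, zero_mul]
    rw [e, key, key]
    have := setIntegral_condExp_mul_comm hm (hX.indicator hC) hgi hg1 (hD.inter hS)
    convert this using 2
    · ext ω; by_cases h : ω ∈ C <;> simp [h, hV]
    · ext ω; by_cases h : ω ∈ C <;> simp [h, hp]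
  filter_upwards [hVA, condExp_mul_of_stronglyMeasurable_left hpA hpAX hX] with ω h1 h2 hω
  rw [h2, Pi.mul_apply, indicator_of_mem hω, indicator_of_mem hω] at h1
  rw [h1, mul_comm]

/-- On `A ⊆ {τ = T}`, every event of `F_u ∨ σ({τ ≤ s} : s ≤ u)` coincides with an event of
`F_u`. -/
lemma exists_trace_of_measurableSet_sup {F : ℝ≥0 → MeasurableSpace Ω} (hF : Monotone F)
    {τ T : Ω → ℝ≥0∞} (hT : IsStoppingTimeE F T) {A : Set Ω} (hA : ∀ ω ∈ A, τ ω = T ω)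
    {u : ℝ≥0} {B : Set Ω}
    (hB : MeasurableSet[F u ⊔ MeasurableSpace.generateFrom
      {A : Set Ω | ∃ s : ℝ≥0, s ≤ u ∧ A = {ω | τ ω ≤ (s : ℝ≥0∞)}}] B) :
    ∃ D, MeasurableSet[F u] D ∧ ∀ ω ∈ A, ω ∈ D ↔ ω ∈ B := by
  have hle : (F u ⊔ MeasurableSpace.generateFrom
      {A : Set Ω | ∃ s : ℝ≥0, s ≤ u ∧ A = {ω | τ ω ≤ (s : ℝ≥0∞)}}).comap (Subtype.val : A → Ω)
      ≤ (F u).comap (Subtype.val : A → Ω) := by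
    rw [comap_sup, comap_generateFrom]
    refine sup_le le_rfl (generateFrom_le ?_)
    rintro _ ⟨_, ⟨s, hs, rfl⟩, rfl⟩
    refine ⟨{ω | T ω ≤ s}, hF hs _ (hT s), ?_⟩
    ext ⟨ω, hω⟩
    simp [hA ω hω]
  obtain ⟨D, hD, hDB⟩ := hle _ ⟨B, hB, rfl⟩
  exact ⟨D, hD, fun ω hω => Set.ext_iff.1 hDB ⟨ω, hω⟩⟩

/-- On `A ⊆ {τ = T}`, every event of the progressive enlargement at time `t` coincides with an
event of `F_t`, provided `F` is right-continuous. -/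
lemma exists_trace_of_measurableSet_progEnlarge {F : ℝ≥0 → MeasurableSpace Ω} (hF : Monotone F)
    (hrc : ∀ t : ℝ≥0, F t = ⨅ u ∈ Set.Ioi t, F u)
    {τ T : Ω → ℝ≥0∞} (hT : IsStoppingTimeE F T) {A : Set Ω} (hA : ∀ ω ∈ A, τ ω = T ω)
    {t : ℝ≥0} {B : Set Ω} (hB : MeasurableSet[progEnlarge F τ t] B) :
    ∃ D, MeasurableSet[F t] D ∧ B ∩ A = D ∩ A := by
  obtain ⟨u, hu_anti, hu_gt, hu_lim⟩ := exists_seq_strictAnti_tendsto t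
  have hB' : ∀ k, ∃ D, MeasurableSet[F (u k)] D ∧ ∀ ω ∈ A, ω ∈ D ↔ ω ∈ B := fun k =>
    exists_trace_of_measurableSet_sup hF hT hA (measurableSet_iInf.1 (measurableSet_iInf.1 hB (u k)) (hu_gt k))
  choose D hD hDB using hB'
  refine ⟨Filter.limsup D Filter.atTop, ?_, ?_⟩
  · rw [hrc t]
    simp only [measurableSet_iInf]
    intro v hv
    obtain ⟨N, hN⟩ := (hu_lim.eventually (gt_mem_nhds hv)).exists
    -- The limsup only depends on the sets `D k` with `k ≥ N`, all of which lie in `F v`.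
    rw [← Filter.limsup_nat_add D N]
    exact @MeasurableSet.measurableSet_limsup _ (F v) _ fun k =>
      hF ((hu_anti.antitone (Nat.le_add_left N k)).trans hN.le) _ (hD _)
  · ext ω
    simp only [mem_inter_iff, Filter.mem_limsup_iff_frequently_mem]
    refine and_congr_left fun hω => ?_
    simp [hDB _ ω hω]

/-- The event `{T ≤ t} ∩ {τ = T < ∞}` is known to the progressive enlargement at time `t`. -/
lemma measurableSet_progEnlarge {F : ℝ≥0 → MeasurableSpace Ω} (hF : Monotone F)
    {τ T : Ω → ℝ≥0∞} (hT : IsStoppingTimeE F T) (t : ℝ≥0) :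
    MeasurableSet[progEnlarge F τ t]
      ({ω | T ω ≤ (t : ℝ≥0∞)} ∩ {ω | τ ω = T ω ∧ τ ω < ∞}) := by
  refine measurableSet_iInf.2 fun u => measurableSet_iInf.2 fun hu => ?_
  rw [mem_Ioi] at hu
  have hτm : ∀ s : ℝ≥0, s ≤ t → MeasurableSet[F u ⊔ MeasurableSpace.generateFrom
      {A : Set Ω | ∃ s : ℝ≥0, s ≤ u ∧ A = {ω | τ ω ≤ (s : ℝ≥0∞)}}] {ω | τ ω ≤ (s : ℝ≥0∞)} :=
    fun s hs => le_sup_right (a := F u) _ (measurableSet_generateFrom ⟨s, hs.trans hu.le, rfl⟩)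
  have hTm : ∀ s : ℝ≥0, s ≤ t → MeasurableSet[F u ⊔ MeasurableSpace.generateFrom
      {A : Set Ω | ∃ s : ℝ≥0, s ≤ u ∧ A = {ω | τ ω ≤ (s : ℝ≥0∞)}}] {ω | T ω ≤ (s : ℝ≥0∞)} :=
    fun s hs => le_sup_left (a := F u) _ (hF (hs.trans hu.le) _ (hT s))
  -- Two times bounded by `t` agree iff no level `min q t` with `q` rational separates them.
  have heq : {ω | T ω ≤ (t : ℝ≥0∞)} ∩ {ω | τ ω = T ω ∧ τ ω < ∞}
      = {ω | τ ω ≤ (t : ℝ≥0∞)} ∩ {ω | T ω ≤ (t : ℝ≥0∞)} ∩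
        ⋂ q : ℚ, ({ω | τ ω ≤ (min (Real.toNNReal q) t : ℝ≥0)} ∆
          {ω | T ω ≤ (min (Real.toNNReal q) t : ℝ≥0)})ᶜ := by
    ext ω
    simp only [mem_inter_iff, mem_setOf_eq, mem_iInter, mem_compl_iff, mem_symmDiff]
    constructor
    · rintro ⟨h1, h2, -⟩
      simp [h2, h1]
    · rintro ⟨⟨h1, h2⟩, h3⟩
      refine ⟨h2, ?_, h1.trans_lt ENNReal.coe_lt_top⟩
      rcases lt_trichotomy (τ ω) (T ω) with h | h | h
      · obtain ⟨q, -, hq1, hq2⟩ := ENNReal.lt_iff_exists_rat_btwn.1 h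
        refine absurd (Or.inl ?_) (h3 q)
        rw [min_eq_left (ENNReal.coe_le_coe.1 (hq2.le.trans h2))]
        exact ⟨hq1.le, hq2.not_ge⟩
      · exact h
      · obtain ⟨q, -, hq1, hq2⟩ := ENNReal.lt_iff_exists_rat_btwn.1 h
        refine absurd (Or.inr ?_) (h3 q)
        rw [min_eq_left (ENNReal.coe_le_coe.1 (hq2.le.trans h1))]
        exact ⟨hq1.le, hq2.not_ge⟩
  rw [heq]
  refine ((hτm t le_rfl).inter (hTm t le_rfl)).inter (MeasurableSet.iInter fun q => ?_)
  exact ((hτm _ (min_le_right _ _)).symmDiff (hTm _ (min_le_right _ _))).compl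

lemma le_progEnlarge {F : ℝ≥0 → MeasurableSpace Ω} (hF : Monotone F) (τ : Ω → ℝ≥0∞) (t : ℝ≥0) :
    F t ≤ progEnlarge F τ t :=
  le_iInf₂ fun _ hu => (hF (le_of_lt hu)).trans le_sup_left

lemma progEnlarge_le [m𝒢 : MeasurableSpace Ω] {F : ℝ≥0 → MeasurableSpace Ω}
    (hF : ∀ t, F t ≤ m𝒢) {τ : Ω → ℝ≥0∞} (hτ : Measurable τ) (t : ℝ≥0) :
    progEnlarge F τ t ≤ m𝒢 := by
  refine (iInf₂_le (t + 1) (lt_add_one t)).trans (sup_le (hF _) (generateFrom_le ?_))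
  rintro _ ⟨s, -, rfl⟩
  exact hτ measurableSet_Iic

/-- A stopping time of a filtration of sub-σ-algebras is a random variable. -/
lemma IsStoppingTimeE.measurable [m𝒢 : MeasurableSpace Ω] {F : ℝ≥0 → MeasurableSpace Ω}
    (hF : ∀ t, F t ≤ m𝒢) {T : Ω → ℝ≥0∞} (hT : IsStoppingTimeE F T) : Measurable T := by
  refine measurable_of_Iic fun x => ?_
  induction x with
  | top => simp
  | coe x => exact hF x _ (hT x)

theorem key_lemma_after_thin_time
    [m𝒢 : MeasurableSpace Ω] (P : Measure Ω) [IsProbabilityMeasure P]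
    (F : ℝ≥0 → MeasurableSpace Ω) (hUC : UsualConditions P F)
    (τ : Ω → ℝ≥0∞) (hτ : Measurable τ)
    (T : ℕ → Ω → ℝ≥0∞) (hT : ExhaustingSeq P F τ T)
    (X : Ω → ℝ) (hXm : Measurable X) (hXi : Integrable X P) :
    ∀ n : ℕ, ∀ t : ℝ≥0,
      ∀ᵐ ω ∂P, (T n ω ≤ (t : ℝ≥0∞) ∧ τ ω = T n ω ∧ τ ω < ∞) →
        (P[X | progEnlarge F τ t]) ω *
            (P[({ω' | τ ω' = T n ω' ∧ τ ω' < ∞}).indicator (fun _ => (1 : ℝ)) | F t]) ω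
          = (P[({ω' | τ ω' = T n ω' ∧ τ ω' < ∞}).indicator X | F t]) ω := by
  intro n t
  obtain ⟨hmono, hle, hrc, -⟩ := hUC
  have hTn := hT.1 n
  have hC : MeasurableSet {ω | τ ω = T n ω ∧ τ ω < ∞} :=
    (measurableSet_eq_fun hτ (hTn.measurable hle)).inter (hτ measurableSet_Iio)
  exact condExp_mul_eq_on_of_trace (le_progEnlarge hmono τ t) (progEnlarge_le hle hτ t)
    (hTn t) hC (measurableSet_progEnlarge hmono hTn t)
    (fun B hB => exists_trace_of_measurableSet_progEnlarge hmono hrc hTn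
      (fun ω hω => hω.2.1) hB) hXi

end
end

section
/- Let τ be an F-thin time with partition (C_n)_{n≥0}. Then the filtrations F^τ and F^𝒞 coincide after τ: for every t ≥ 0 and every set G ∈ F^𝒞_t there exists a set F ∈ F^τ_t such that {τ ≤ t} ∩ G = {τ ≤ t} ∩ F. -/
/-!
The set `E := {τ ≤ t} ∩ G` itself works; the point is that it belongs to
`H u := F u ∨ σ({τ ≤ s} : s ≤ u)` for every `u > t`. The sets `G` with `{τ ≤ t} ∩ G ∈ H u` form a
σ-algebra because `{τ ≤ t} ∈ H u` (`measurableSet_inter_of_sup_generateFrom`), and include `F u`, so it suffices to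
treat the generators of the partition σ-algebra. The set `{τ = ∞}` does not meet `{τ ≤ t}`, and
`{τ ≤ t} ∩ {τ = T n < ∞} = {τ ≤ t} ∩ {T n ≤ t} ∩ {τ ∧ t = T n ∧ t}`, where `τ ∧ t` and `T n ∧ t`
are both `H u`-measurable (`measurable_min_of_forall_le`). Hence the inclusion holds surely, without
any appeal to null sets.
-/

open MeasureTheory MeasurableSpace Set
open scoped NNReal ENNReal symmDiff

noncomputable section

variable {Ω : Type*}

/-- A time whose sublevel sets up to `t` are observable is observable once stopped at `t`. -/
lemma measurable_min_of_forall_le (H : MeasurableSpace Ω) (ρ : Ω → ℝ≥0∞) (t : ℝ≥0)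
    (h : ∀ s : ℝ≥0, s ≤ t → MeasurableSet[H] {ω | ρ ω ≤ (s : ℝ≥0∞)}) :
    Measurable[H] fun ω => min (ρ ω) (t : ℝ≥0∞) := by
  refine measurable_of_Iic fun x => ?_
  rcases le_or_gt (t : ℝ≥0∞) x with hx | hx
  · have : (fun ω => min (ρ ω) (t : ℝ≥0∞)) ⁻¹' Iic x = univ := by
      ext ω; simp [hx]
    rw [this]; exact MeasurableSet.univ
  · lift x to ℝ≥0 using hx.ne_top
    have : (fun ω => min (ρ ω) (t : ℝ≥0∞)) ⁻¹' Iic (x : ℝ≥0∞) = {ω | ρ ω ≤ (x : ℝ≥0∞)} := by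
      ext ω; simp [ENNReal.coe_lt_coe.1 hx]
    rw [this]; exact h x (ENNReal.coe_lt_coe.1 hx).le

/-- Traces on `A ∈ H` of sets of `m₁ ⊔ m₂` lie in `H` as soon as those of `m₁` and of the
generators of `m₂` do. -/
lemma measurableSet_inter_of_sup_generateFrom (H m₁ : MeasurableSpace Ω) (S : Set (Set Ω))
    (A : Set Ω) (hA : MeasurableSet[H] A)
    (h₁ : ∀ B, MeasurableSet[m₁] B → MeasurableSet[H] (A ∩ B))
    (h₂ : ∀ B ∈ S, MeasurableSet[H] (A ∩ B)) (G : Set Ω)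
    (hG : MeasurableSet[m₁ ⊔ generateFrom S] G) : MeasurableSet[H] (A ∩ G) := by
  -- `K` consists of the sets whose trace on `A` is the trace of a set of `H`.
  let K : MeasurableSpace Ω := (H.comap (Subtype.val : A → Ω)).map Subtype.val
  have hK : ∀ B, MeasurableSet[H] (A ∩ B) → MeasurableSet[K] B := fun B hB =>
    ⟨A ∩ B, hB, by ext x; simp⟩
  have hle : m₁ ⊔ generateFrom S ≤ K :=
    sup_le (fun B hB => hK B (h₁ B hB)) (generateFrom_le fun B hB => hK B (h₂ B hB))
  obtain ⟨B, hB, hBG⟩ := hle G hG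
  rw [← (Subtype.preimage_val_eq_preimage_val_iff A B G).1 hBG]
  exact hA.inter hB

theorem filtrations_coincide_after_thin_time
    [m𝒢 : MeasurableSpace Ω] (P : Measure Ω) [IsProbabilityMeasure P]
    (F : ℝ≥0 → MeasurableSpace Ω) (hUC : UsualConditions P F)
    (τ : Ω → ℝ≥0∞) (hτ : Measurable τ)
    (T : ℕ → Ω → ℝ≥0∞) (hT : ExhaustingSeq P F τ T) :
    ∀ t : ℝ≥0, ∀ G : Set Ω, MeasurableSet[initEnlarge F (partitionSigma τ T) t] G →
      ∃ E : Set Ω, MeasurableSet[progEnlarge F τ t] E ∧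
        {ω | τ ω ≤ (t : ℝ≥0∞)} ∩ G = {ω | τ ω ≤ (t : ℝ≥0∞)} ∩ E := by
  intro t G hG
  refine ⟨{ω | τ ω ≤ (t : ℝ≥0∞)} ∩ G, ?_, by rw [← inter_assoc, inter_self]⟩
  unfold progEnlarge
  refine measurableSet_iInf.2 fun u => measurableSet_iInf.2 fun hu => ?_
  have hGu := measurableSet_iInf.1 (measurableSet_iInf.1 hG u) hu
  have htu : t ≤ u := (mem_Ioi.1 hu).le
  set H : MeasurableSpace Ω := F u ⊔ generateFrom
    {A : Set Ω | ∃ s : ℝ≥0, s ≤ u ∧ A = {ω | τ ω ≤ (s : ℝ≥0∞)}}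
  have hFH : F u ≤ H := le_sup_left
  have hτH : ∀ s : ℝ≥0, s ≤ t → MeasurableSet[H] {ω | τ ω ≤ (s : ℝ≥0∞)} := fun s hs =>
    (le_sup_right : _ ≤ H) _ (measurableSet_generateFrom ⟨s, hs.trans htu, rfl⟩)
  have hTH : ∀ n, ∀ s : ℝ≥0, s ≤ t → MeasurableSet[H] {ω | T n ω ≤ (s : ℝ≥0∞)} :=
    fun n s hs => hFH _ (hUC.1 (hs.trans htu) _ (hT.1 n s))
  refine measurableSet_inter_of_sup_generateFrom H (F u) _ _ (hτH t le_rfl)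
    (fun B hB => (hτH t le_rfl).inter (hFH B hB)) ?_ G hGu
  rintro B (rfl | ⟨n, rfl⟩)
  · have : {ω | τ ω ≤ (t : ℝ≥0∞)} ∩ {ω | τ ω = ∞} = ∅ := by
      ext ω
      simp only [mem_inter_iff, mem_ofPred_eq, mem_empty_iff_false, iff_false, not_and]
      intro h h'
      simp [h'] at h
    rw [this]; exact MeasurableSet.empty
  · have : {ω | τ ω ≤ (t : ℝ≥0∞)} ∩ {ω | τ ω = T n ω ∧ τ ω < ∞} =
        ({ω | τ ω ≤ (t : ℝ≥0∞)} ∩ {ω | T n ω ≤ (t : ℝ≥0∞)}) ∩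
          {ω | min (τ ω) (t : ℝ≥0∞) = min (T n ω) (t : ℝ≥0∞)} := by
      ext ω
      simp only [mem_inter_iff, mem_ofPred_eq]
      constructor
      · rintro ⟨h, h', -⟩
        exact ⟨⟨h, h' ▸ h⟩, by rw [h']⟩
      · rintro ⟨⟨h, h'⟩, he⟩
        rw [min_eq_left h, min_eq_left h'] at he
        exact ⟨h, he, h.trans_lt ENNReal.coe_lt_top⟩
    rw [this]
    exact ((hτH t le_rfl).inter (hTH n t le_rfl)).inter
      (@measurableSet_eq_fun Ω ℝ≥0∞ H _ _ _ _
        (measurable_min_of_forall_le H τ t hτH) (measurable_min_of_forall_le H (T n) t (hTH n)))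

end
end

section
/- Let τ be an F-thin time with partition (C_n)_{n≥0}, and let ϑ be an F^𝒞-stopping time with values in [0,∞]. Then the pointwise maximum ϑ ∨ τ is an F^τ-stopping time, i.e., {ϑ ∨ τ ≤ t} ∈ F^τ_t for every t ≥ 0. -/
/-!
Fix `t < u`. Then `{ϑ ∨ τ ≤ t} = ({ϑ ≤ t} ∩ {τ ≤ u}) ∩ {τ ≤ t}`, and `{ϑ ≤ t} ∈ F_u ∨ 𝒞`, so it is
enough that on `{τ ≤ u}` the σ-algebra `F_u ∨ 𝒞` is contained in
`G = F_u ∨ σ({τ ≤ s} : s ≤ u)`. The sets whose trace on `{τ ≤ u}` lies in `G` form a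
σ-algebra (`traceSigma`), which contains `F_u`. It also contains the generators of `𝒞`:
`{τ = ∞}` has empty trace, and `{τ = T_n < ∞}` has the trace
`{τ ∧ u = T_n ∧ u} ∩ {τ ≤ u} ∩ {T_n ≤ u}`, where `τ ∧ u` and `T_n ∧ u` are `G`-measurable
(`measurable_min_of_le`).
-/

open MeasureTheory MeasurableSpace Set
open scoped NNReal ENNReal symmDiff

noncomputable section

variable {Ω : Type*}

/-- The σ-algebra of those sets `A` whose trace `A ∩ B` on a fixed set `B ∈ G` lies in `G`. -/
def traceSigma (G : MeasurableSpace Ω) (B : Set Ω) (hB : MeasurableSet[G] B) :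
    MeasurableSpace Ω where
  MeasurableSet' A := MeasurableSet[G] (A ∩ B)
  measurableSet_empty := by
    simp only [Set.empty_inter]
    exact @MeasurableSet.empty Ω G
  measurableSet_compl := by
    intro A hA
    have h : Aᶜ ∩ B = B \ (A ∩ B) := by
      ext ω; simp only [Set.mem_inter_iff, Set.mem_compl_iff, Set.mem_sdiff]; tauto
    rw [h]
    exact hB.diff hA
  measurableSet_iUnion := by
    intro f hf
    rw [Set.iUnion_inter]
    exact MeasurableSet.iUnion hf

lemma measurable_min_of_le (G : MeasurableSpace Ω) (u : ℝ≥0) (X : Ω → ℝ≥0∞)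
    (hX : ∀ s : ℝ≥0, s ≤ u → MeasurableSet[G] {ω | X ω ≤ (s : ℝ≥0∞)}) :
    Measurable[G] fun ω => min (X ω) (u : ℝ≥0∞) := by
  refine measurable_of_Iic fun a => ?_
  by_cases hua : (u : ℝ≥0∞) ≤ a
  · have h : (fun ω => min (X ω) (u : ℝ≥0∞)) ⁻¹' Set.Iic a = Set.univ := by
      ext ω; simp [hua]
    rw [h]
    exact @MeasurableSet.univ Ω G
  · have hau : a < u := not_le.mp hua
    lift a to ℝ≥0 using (hau.trans ENNReal.coe_lt_top).ne
    have h : (fun ω => min (X ω) (u : ℝ≥0∞)) ⁻¹' Set.Iic (a : ℝ≥0∞)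
        = {ω | X ω ≤ (a : ℝ≥0∞)} := by
      ext ω
      simp only [Set.mem_preimage, Set.mem_Iic, min_le_iff, Set.mem_ofPred_eq]
      exact or_iff_left hua
    rw [h]
    exact hX a (ENNReal.coe_lt_coe.mp hau).le

theorem max_with_thin_time_is_stopping_time
    [m𝒢 : MeasurableSpace Ω] (P : Measure Ω) [IsProbabilityMeasure P]
    (F : ℝ≥0 → MeasurableSpace Ω) (hUC : UsualConditions P F)
    (τ : Ω → ℝ≥0∞) (hτ : Measurable τ)
    (T : ℕ → Ω → ℝ≥0∞) (hT : ExhaustingSeq P F τ T)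
    (ϑ : Ω → ℝ≥0∞) (hϑ : IsStoppingTimeE (initEnlarge F (partitionSigma τ T)) ϑ) :
    ∀ t : ℝ≥0, MeasurableSet[progEnlarge F τ t] {ω | max (ϑ ω) (τ ω) ≤ (t : ℝ≥0∞)} := by
  intro t
  unfold progEnlarge
  simp only [MeasurableSpace.measurableSet_iInf]
  intro u htu
  have htu' : t < u := htu
  set G : MeasurableSpace Ω := F u ⊔ MeasurableSpace.generateFrom
    {A : Set Ω | ∃ s : ℝ≥0, s ≤ u ∧ A = {ω | τ ω ≤ (s : ℝ≥0∞)}} with hG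
  have hFG : F u ≤ G := le_sup_left
  have hτG : ∀ s : ℝ≥0, s ≤ u → MeasurableSet[G] {ω | τ ω ≤ (s : ℝ≥0∞)} := fun s hs =>
    (le_sup_right : _ ≤ G) _ (MeasurableSpace.measurableSet_generateFrom ⟨s, hs, rfl⟩)
  have hTG : ∀ n, ∀ s : ℝ≥0, s ≤ u → MeasurableSet[G] {ω | T n ω ≤ (s : ℝ≥0∞)} :=
    fun n s hs => hFG _ (hUC.1 hs _ (hT.1 n s))
  have hle : F u ⊔ partitionSigma τ T ≤ traceSigma G _ (hτG u le_rfl) := by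
    refine sup_le (fun A hA => (hFG A hA).inter (hτG u le_rfl)) ?_
    refine MeasurableSpace.generateFrom_le ?_
    rintro A (rfl | ⟨n, rfl⟩)
    · have h : {ω | τ ω = ∞} ∩ {ω | τ ω ≤ (u : ℝ≥0∞)} = ∅ := by
        ext ω
        simp only [Set.mem_inter_iff, Set.mem_ofPred_eq, Set.mem_empty_iff_false, iff_false]
        rintro ⟨h1, h2⟩
        simp [h1] at h2
      change MeasurableSet[G] ({ω | τ ω = ∞} ∩ {ω | τ ω ≤ (u : ℝ≥0∞)})
      rw [h]
      exact @MeasurableSet.empty Ω G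
    · have h : {ω | τ ω = T n ω ∧ τ ω < ∞} ∩ {ω | τ ω ≤ (u : ℝ≥0∞)}
          = {ω | min (τ ω) (u : ℝ≥0∞) = min (T n ω) (u : ℝ≥0∞)}
            ∩ {ω | τ ω ≤ (u : ℝ≥0∞)} ∩ {ω | T n ω ≤ (u : ℝ≥0∞)} := by
        ext ω
        simp only [Set.mem_inter_iff, Set.mem_ofPred_eq]
        constructor
        · rintro ⟨⟨h1, -⟩, h2⟩
          exact ⟨⟨by rw [h1], h2⟩, h1 ▸ h2⟩
        · rintro ⟨⟨h1, h2⟩, h3⟩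
          rw [min_eq_left h2, min_eq_left h3] at h1
          exact ⟨⟨h1, h2.trans_lt ENNReal.coe_lt_top⟩, h2⟩
      change MeasurableSet[G] ({ω | τ ω = T n ω ∧ τ ω < ∞} ∩ {ω | τ ω ≤ (u : ℝ≥0∞)})
      rw [h]
      exact ((measurableSet_eq_fun (m := G) (measurable_min_of_le G u τ hτG)
        (measurable_min_of_le G u (T n) (hTG n))).inter (hτG u le_rfl)).inter (hTG n u le_rfl)
  have hϑu : MeasurableSet[F u ⊔ partitionSigma τ T] {ω | ϑ ω ≤ (t : ℝ≥0∞)} :=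
    (iInf₂_le u htu : initEnlarge F (partitionSigma τ T) t ≤ _) _ (hϑ t)
  have hmain : MeasurableSet[G] ({ω | ϑ ω ≤ (t : ℝ≥0∞)} ∩ {ω | τ ω ≤ (u : ℝ≥0∞)}) :=
    hle _ hϑu
  have heq : {ω | max (ϑ ω) (τ ω) ≤ (t : ℝ≥0∞)}
      = ({ω | ϑ ω ≤ (t : ℝ≥0∞)} ∩ {ω | τ ω ≤ (u : ℝ≥0∞)}) ∩ {ω | τ ω ≤ (t : ℝ≥0∞)} := by
    ext ω
    simp only [Set.mem_inter_iff, Set.mem_ofPred_eq, max_le_iff]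
    have htuE : (t : ℝ≥0∞) ≤ u := ENNReal.coe_le_coe.mpr htu'.le
    exact ⟨fun h => ⟨⟨h.1, h.2.trans htuE⟩, h.2⟩, fun h => ⟨h.1.1, h.2⟩⟩
  rw [heq]
  exact hmain.inter (hτG t htu'.le)

end
end

section
/- The thin-thick decomposition of a random time τ is unique on {τ < ∞}: if (τ₁, τ₂) and (σ₁, σ₂) are both thin-thick decompositions of τ, then P-a.s. on {τ < ∞} one has τ₁ = σ₁ and τ₂ = σ₂. -/
/-!
A thin time `ρ` and a thick time `σ` almost surely never agree at a finite value: `ρ` is covered by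
the graphs of countably many stopping times, and `σ` charges none of them
(`IsThinTime.ae_ne_of_isThickTime`). Where `τ < ∞`, exactly one component of each decomposition
equals `τ` and the other is `∞`. If the two decompositions disagreed on which component is finite,
the thin time of one would meet the thick time of the other at the finite value `τ`.
-/

open MeasureTheory MeasurableSpace Set
open scoped NNReal ENNReal symmDiff

noncomputable section

variable {Ω : Type*}

/-- A thin and a thick time almost surely never meet at a finite value: the meeting set is covered
by the countably many null sets on which the thick time equals a member of an exhausting sequence. -/
theorem IsThinTime.ae_ne_of_isThickTime [MeasurableSpace Ω] {P : Measure Ω}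
    {F : ℝ≥0 → MeasurableSpace Ω} {ρ σ : Ω → ℝ≥0∞}
    (hρ : IsThinTime P F ρ) (hσ : IsThickTime P F σ) :
    ∀ᵐ ω ∂P, ρ ω < ∞ → ρ ω ≠ σ ω := by
  obtain ⟨T, hT, -, hcover⟩ := hρ
  have havoid : ∀ᵐ ω ∂P, ∀ n, ¬ (σ ω = T n ω ∧ σ ω < ∞) :=
    ae_all_iff.2 fun n => measure_eq_zero_iff_ae_notMem.1 (hσ (T n) (hT n))
  filter_upwards [hcover, havoid] with ω hc ha hfin heq
  obtain ⟨n, hn⟩ := hc hfin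
  exact ha n ⟨heq ▸ hn, heq ▸ hfin⟩

theorem thin_thick_decomposition_unique
    [m𝒢 : MeasurableSpace Ω] (P : Measure Ω) [IsProbabilityMeasure P]
    (F : ℝ≥0 → MeasurableSpace Ω) (hUC : UsualConditions P F)
    (τ τ₁ τ₂ σ₁ σ₂ : Ω → ℝ≥0∞) (hτ : Measurable τ)
    (hτ₁ : Measurable τ₁) (hτ₂ : Measurable τ₂)
    (hσ₁ : Measurable σ₁) (hσ₂ : Measurable σ₂)
    (h₁ : ThinThickDecomp P F τ τ₁ τ₂) (h₂ : ThinThickDecomp P F τ σ₁ σ₂) :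
    ∀ᵐ ω ∂P, τ ω < ∞ → (τ₁ ω = σ₁ ω ∧ τ₂ ω = σ₂ ω) := by
  obtain ⟨hthin, hthick, hmin, hmax⟩ := h₁
  obtain ⟨hthin', hthick', hmin', hmax'⟩ := h₂
  filter_upwards [hthin.ae_ne_of_isThickTime hthick', hthin'.ae_ne_of_isThickTime hthick,
    hmin, hmax, hmin', hmax'] with ω hne hne' hm hM hm' hM' hfin
  rw [max_eq_top] at hM hM'
  rcases hM with h | h <;> rcases hM' with h' | h' <;>
    simp only [h, h', min_top_left, min_top_right] at hm hm' ⊢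
  · exact ⟨trivial, hm.symm.trans hm'⟩
  · exact (hne' (hm' ▸ hfin) (hm'.symm.trans hm)).elim
  · exact (hne (hm ▸ hfin) (hm.symm.trans hm')).elim
  · exact ⟨hm.symm.trans hm', trivial⟩

end
end

section
/- Let τ be a random time. The following are equivalent: (i) τ is an F-honest time, i.e., for every t > 0 there exists an F_t-measurable random variable τ_t such that τ = τ_t on {τ < t}; (ii) for every t > 0 there exists an F_{t-}-measurable random variable τ_t such that τ = τ_t on {τ < t}, where F_{t-} := σ(⋃_{s<t} F_s); (iii) for every t > 0 there exists an F_t-measurable random variable τ'_t such that τ = τ'_t on {τ ≤ t}. Moreover, in (iii) the random variable τ'_t may be chosen so that τ'_t ≤ t everywhere. -/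
/-!
Choose times `t_n` tending strictly monotonically to `t`, and take the `liminf` of the witnesses
`τ_{t_n}` of honesty. If `t_n ↑ t`, the `liminf` is `F_{t-}`-measurable and agrees with `τ` on
`{τ < t}`. If `t_n ↓ t`, it is measurable for `⋂_{u > t} F_u = F_t` and agrees with `τ` on
`{τ ≤ t}`. The converse implications follow from `F_{t-} ⊆ F_t` and `{τ < t} ⊆ {τ ≤ t}`.
-/

open MeasureTheory MeasurableSpace Set
open scoped NNReal ENNReal symmDiff

noncomputable section

variable {Ω : Type*}

/-- `F_{t-}`-measurable version: along `t_n ↑ t`, on `{τ < t}` the sequence of witnesses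
`τ_{t_n}` is eventually equal to `τ`, so its `liminf` is the required random variable. -/
lemma exists_left_of_honest [MeasurableSpace Ω] {P : Measure Ω}
    {F : ℝ≥0 → MeasurableSpace Ω} {τ : Ω → ℝ≥0∞} (h : IsHonestTime P F τ)
    (t : ℝ≥0) (ht : 0 < t) :
    ∃ σ : Ω → ℝ≥0∞, Measurable[⨆ s ∈ Set.Iio t, F s] σ ∧
      ∀ᵐ ω ∂P, τ ω < (t : ℝ≥0∞) → τ ω = σ ω := by
  obtain ⟨u, -, hu, hlim⟩ := exists_seq_strictMono_tendsto' ht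
  choose σ hσ hτσ using fun n => h (u n) (hu n).1
  refine ⟨fun ω => Filter.liminf (fun n => σ n ω) Filter.atTop,
    Measurable.liminf (fun n => ?_), ?_⟩
  · exact (hσ n).mono (le_iSup₂_of_le (u n) (hu n).2 le_rfl) le_rfl
  · filter_upwards [ae_all_iff.2 hτσ] with ω hω hlt
    have hlim' : Filter.Tendsto (fun n => (u n : ℝ≥0∞)) Filter.atTop (nhds (t : ℝ≥0∞)) :=
      ENNReal.tendsto_coe.2 hlim
    have hev : (fun n => σ n ω) =ᶠ[Filter.atTop] fun _ => τ ω := by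
      filter_upwards [hlim'.eventually (lt_mem_nhds hlt)] with n hn using (hω n hn).symm
    rw [Filter.liminf_congr hev, Filter.liminf_const]

/-- Along `t_n ↓ t`, on `{τ ≤ t}` every witness `τ_{t_n}` equals `τ`. The `liminf` depends only
on the tails of the sequence, hence is `F_{t+}`-measurable, and right-continuity gives
`F_t`-measurability; truncating at `t` does not change it on `{τ ≤ t}`. -/
lemma exists_closed_of_honest [MeasurableSpace Ω] {P : Measure Ω}
    {F : ℝ≥0 → MeasurableSpace Ω} (hmono : Monotone F)
    (hright : ∀ t : ℝ≥0, F t = ⨅ u ∈ Set.Ioi t, F u)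
    {τ : Ω → ℝ≥0∞} (h : IsHonestTime P F τ) (t : ℝ≥0) :
    ∃ σ : Ω → ℝ≥0∞, Measurable[F t] σ ∧ (∀ ω, σ ω ≤ (t : ℝ≥0∞)) ∧
      ∀ᵐ ω ∂P, τ ω ≤ (t : ℝ≥0∞) → τ ω = σ ω := by
  obtain ⟨u, hanti, hu, hlim⟩ := exists_seq_strictAnti_tendsto t
  choose σ hσ hτσ using fun n => h (u n) (bot_le.trans_lt (hu n))
  have hmeas : Measurable[F t] fun ω => Filter.liminf (fun n => σ n ω) Filter.atTop := by
    intro A hA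
    rw [hright t]
    simp only [measurableSet_iInf]
    intro v hv
    obtain ⟨k, hk⟩ := (hlim.eventually (gt_mem_nhds hv)).exists
    have htail : (fun ω => Filter.liminf (fun n => σ n ω) Filter.atTop) =
        fun ω => Filter.liminf (fun n => σ (n + k) ω) Filter.atTop :=
      funext fun ω => (Filter.liminf_nat_add (fun n => σ n ω) k).symm
    rw [htail]
    refine Measurable.liminf (fun n => ?_) hA
    exact (hσ (n + k)).mono
      (hmono ((hanti.antitone (Nat.le_add_left k n)).trans hk.le)) le_rfl
  refine ⟨fun ω => min (Filter.liminf (fun n => σ n ω) Filter.atTop) t,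
    hmeas.min measurable_const,
    fun ω => min_le_right _ _, ?_⟩
  filter_upwards [ae_all_iff.2 hτσ] with ω hω hle
  have heq : (fun n => σ n ω) = fun _ => τ ω :=
    funext fun n => (hω n (hle.trans_lt (ENNReal.coe_lt_coe.2 (hu n)))).symm
  simp only [heq, Filter.liminf_const, min_eq_left hle]

theorem honest_time_characterizations
    [m𝒢 : MeasurableSpace Ω] (P : Measure Ω) [IsProbabilityMeasure P]
    (F : ℝ≥0 → MeasurableSpace Ω) (hUC : UsualConditions P F)
    (τ : Ω → ℝ≥0∞) (hτ : Measurable τ) :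
    (IsHonestTime P F τ ↔
      ∀ t : ℝ≥0, 0 < t → ∃ σ : Ω → ℝ≥0∞, Measurable[⨆ s ∈ Set.Iio t, F s] σ ∧
        ∀ᵐ ω ∂P, τ ω < (t : ℝ≥0∞) → τ ω = σ ω) ∧
    (IsHonestTime P F τ ↔
      ∀ t : ℝ≥0, 0 < t → ∃ σ : Ω → ℝ≥0∞, Measurable[F t] σ ∧
        ∀ᵐ ω ∂P, τ ω ≤ (t : ℝ≥0∞) → τ ω = σ ω) ∧
    (IsHonestTime P F τ →
      ∀ t : ℝ≥0, 0 < t → ∃ σ : Ω → ℝ≥0∞, Measurable[F t] σ ∧ (∀ ω, σ ω ≤ (t : ℝ≥0∞)) ∧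
        ∀ᵐ ω ∂P, τ ω ≤ (t : ℝ≥0∞) → τ ω = σ ω) := by
  obtain ⟨hmono, -, hright, -⟩ := hUC
  refine ⟨⟨exists_left_of_honest, fun h t ht => ?_⟩, ⟨fun h t _ => ?_, fun h t ht => ?_⟩,
    fun h t _ => exists_closed_of_honest hmono hright h t⟩
  · obtain ⟨σ, hσ, he⟩ := h t ht
    exact ⟨σ, hσ.mono (iSup₂_le fun s hs => hmono (le_of_lt hs)) le_rfl, he⟩
  · obtain ⟨σ, hσ, -, he⟩ := exists_closed_of_honest hmono hright h t
    exact ⟨σ, hσ, he⟩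
  · obtain ⟨σ, hσ, he⟩ := h t ht
    exact ⟨σ, hσ, he.mono fun ω hω hlt => hω hlt.le⟩

end
end

section
/- Suppose F is a jumping filtration, i.e., there exists a sequence (θ_n)_{n≥0} of F-stopping times with θ_0 = 0, increasing P-a.s. to ∞, such that for all n ≥ 0 and all t > 0 the σ-algebras F_t and F_{θ_n} coincide up to P-null sets on {θ_n ≤ t < θ_{n+1}} (for every A ∈ F_t there is B ∈ F_{θ_n} with A ∩ {θ_n ≤ t < θ_{n+1}} = B ∩ {θ_n ≤ t < θ_{n+1}} up to a P-null set, and conversely). Then every F-honest time is an F-thin time. -/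
/-!
Let `τ` be honest. On `{θ n ≤ τ < θ (n+1)}` pick a rational `q` with `τ < q < θ (n+1)`. Honesty
gives `τ = σ` for some `F q`-measurable `σ`, and since `F q` and `F_{θ n}` have the same trace on
`{θ n ≤ q < θ (n+1)}`, `σ` agrees there a.s. with an `F_{θ n}`-measurable `σ'`
(`exists_measurable_ae_eq_on`). A variable `σ'` that is `F_{θ n}`-measurable becomes a stopping
time once it is set to `∞` where `σ' < θ n` (`isStoppingTimeE_of_measurable`). As `θ n` increases
to `∞`, the countably many stopping times obtained from the pairs `(n, q)` cover the graph of `τ`;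
`exists_disjointGraphs` makes their graphs disjoint.
-/

open MeasureTheory MeasurableSpace Set
open scoped NNReal ENNReal symmDiff

noncomputable section

variable {Ω : Type*}

theorem measurable_min_of_isStoppingTimeE {F : ℝ≥0 → MeasurableSpace Ω} (hF : Monotone F)
    {T : Ω → ℝ≥0∞} (hT : IsStoppingTimeE F T) (t : ℝ≥0) :
    Measurable[F t] fun ω => min (T ω) (t : ℝ≥0∞) := by
  refine measurable_of_Iic fun a => ?_
  rcases le_or_gt (t : ℝ≥0∞) a with h | h
  · have : (fun ω => min (T ω) (t : ℝ≥0∞)) ⁻¹' Iic a = univ := by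
      ext ω; simp [h]
    rw [this]
    exact @MeasurableSet.univ _ (F t)
  · lift a to ℝ≥0 using (h.trans ENNReal.coe_lt_top).ne
    have : (fun ω => min (T ω) (t : ℝ≥0∞)) ⁻¹' Iic (a : ℝ≥0∞) = {ω | T ω ≤ a} := by
      ext ω; simp only [mem_preimage, mem_Iic, min_le_iff, mem_ofPred_eq]
      exact or_iff_left h.not_ge
    rw [this]
    exact hF (by exact_mod_cast h.le) _ (hT a)

/-- `T n` is kept where it differs from all `T j` with `j < n`, and set to `∞` elsewhere. -/
theorem exists_disjointGraphs [MeasurableSpace Ω] (P : Measure Ω)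
    {F : ℝ≥0 → MeasurableSpace Ω} (hF : Monotone F) {T : ℕ → Ω → ℝ≥0∞}
    (hT : ∀ n, IsStoppingTimeE F (T n)) :
    ∃ S : ℕ → Ω → ℝ≥0∞, (∀ n, IsStoppingTimeE F (S n)) ∧ DisjointGraphs P S ∧
      ∀ ω n, ∃ m, T n ω = S m ω := by
  classical
  refine ⟨fun n ω => if ∃ j < n, T j ω = T n ω then ∞ else T n ω, fun n t => ?_, ?_, ?_⟩
  · have : {ω | (if ∃ j < n, T j ω = T n ω then ∞ else T n ω) ≤ (t : ℝ≥0∞)} =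
        {ω | T n ω ≤ t} \ ⋃ j, ⋃ (_ : j < n),
          ({ω | T j ω ≤ t} ∩ {ω | min (T j ω) (t : ℝ≥0∞) = min (T n ω) (t : ℝ≥0∞)}) := by
      ext ω
      simp only [mem_ofPred_eq, mem_sdiff, mem_iUnion, mem_inter_iff, exists_prop]
      split_ifs with h
      · obtain ⟨j, hj, he⟩ := h
        simp only [top_le_iff, ENNReal.coe_ne_top, false_iff, not_and, not_not]
        exact fun h => ⟨j, hj, he ▸ h, by rw [he]⟩
      · refine ⟨fun h1 => ⟨h1, ?_⟩, fun h1 => h1.1⟩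
        rintro ⟨j, hj, h2, h3⟩
        rw [min_eq_left h1, min_eq_left h2] at h3
        exact h ⟨j, hj, h3⟩
    rw [this]
    refine (hT n t).diff (.iUnion fun j => .iUnion fun _ => (hT j t).inter ?_)
    exact measurableSet_eq_fun
      (measurable_min_of_isStoppingTimeE hF (hT j) t)
      (measurable_min_of_isStoppingTimeE hF (hT n) t)
  · intro n m hnm
    convert measure_empty (μ := P)
    rw [eq_empty_iff_forall_notMem]
    rintro ω ⟨h1, h2⟩
    dsimp only at h1 h2
    split_ifs at h1 h2 with h3 h4 h4
    · exact lt_irrefl _ h2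
    · exact lt_irrefl _ h2
    · exact h2.ne h1
    · rcases hnm.lt_or_gt with h | h
      · exact h4 ⟨n, h, h1⟩
      · exact h3 ⟨m, h, h1.symm⟩
  · intro ω n
    -- the first index at which the value `T n ω` is attained keeps that value
    have hex : ∃ m, T m ω = T n ω := ⟨n, rfl⟩
    refine ⟨Nat.find hex, ?_⟩
    dsimp only
    rw [if_neg, Nat.find_spec hex]
    rintro ⟨j, hj, he⟩
    exact Nat.find_min hex hj (he.trans (Nat.find_spec hex))

theorem measurable_stoppingSigma [m𝒢 : MeasurableSpace Ω] {F : ℝ≥0 → MeasurableSpace Ω}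
    (hF : Monotone F) (hle : ∀ t, F t ≤ m𝒢) {T : Ω → ℝ≥0∞} (hT : IsStoppingTimeE F T) :
    Measurable[stoppingSigma F T hT] T := by
  refine measurable_of_Iic fun a => ?_
  induction a with
  | top => simp
  | coe a =>
    refine ⟨hle a _ (hT a), fun t => ?_⟩
    have : T ⁻¹' Iic (a : ℝ≥0∞) ∩ {ω | T ω ≤ t} = {ω | T ω ≤ (min a t : ℝ≥0)} := by
      ext ω; simp
    rw [this]
    exact hF (min_le_right a t) _ (hT _)

open Classical in
/-- On `{σ ≤ t}` the restriction to `{T ≤ σ}` forces `T ≤ t`, where `F_T` lies in `F t`. -/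
theorem isStoppingTimeE_of_measurable [m𝒢 : MeasurableSpace Ω] {F : ℝ≥0 → MeasurableSpace Ω}
    (hF : Monotone F) (hle : ∀ t, F t ≤ m𝒢) {T : Ω → ℝ≥0∞} (hT : IsStoppingTimeE F T)
    {σ : Ω → ℝ≥0∞} (hσ : Measurable[stoppingSigma F T hT] σ) :
    IsStoppingTimeE F fun ω => if T ω ≤ σ ω then σ ω else ∞ := by
  intro t
  have : {ω | (if T ω ≤ σ ω then σ ω else ∞) ≤ (t : ℝ≥0∞)} =
      ({ω | T ω ≤ σ ω} ∩ {ω | σ ω ≤ t}) ∩ {ω | T ω ≤ t} := by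
    ext ω
    simp only [mem_ofPred_eq, mem_inter_iff]
    split_ifs with h
    · exact ⟨fun h1 => ⟨⟨h, h1⟩, h.trans h1⟩, fun h1 => h1.1.2⟩
    · simp [h]
  rw [this]
  have hm : MeasurableSet[stoppingSigma F T hT] ({ω | T ω ≤ σ ω} ∩ {ω | σ ω ≤ t}) :=
    MeasurableSet.inter
      (measurableSet_le
        (measurable_stoppingSigma hF hle hT) hσ)
      (measurableSet_le hσ
        measurable_const)
  exact hm.2 t

/-- If every `m₁`-measurable set agrees on `E`, up to a null set, with an `m₂`-measurable one,
then every `m₁`-measurable variable agrees a.s. on `E` with an `m₂`-measurable one. -/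
theorem exists_measurable_ae_eq_on [MeasurableSpace Ω] (P : Measure Ω)
    (m₁ m₂ : MeasurableSpace Ω) (E : Set Ω)
    (h : ∀ A, MeasurableSet[m₁] A → ∃ B, MeasurableSet[m₂] B ∧ P ((A ∩ E) ∆ (B ∩ E)) = 0)
    {σ : Ω → ℝ≥0∞} (hσ : Measurable[m₁] σ) :
    ∃ σ' : Ω → ℝ≥0∞, Measurable[m₂] σ' ∧ ∀ᵐ ω ∂P, ω ∈ E → σ ω = σ' ω := by
  classical
  choose B hB hPB using fun r : ℚ =>
    h {ω | σ ω < (Real.toNNReal r : ℝ≥0∞)} (hσ measurableSet_Iio)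
  -- `B r` replaces `{σ < r}`, and `σ = inf {r | σ < r}`
  refine ⟨fun ω => ⨅ r : ℚ, if ω ∈ B r then (Real.toNNReal r : ℝ≥0∞) else ∞, ?_, ?_⟩
  · refine Measurable.iInf fun r => ?_
    exact Measurable.ite (hB r) measurable_const measurable_const
  · have hae : ∀ᵐ ω ∂P, ∀ r : ℚ,
        ω ∉ ({ω | σ ω < (Real.toNNReal r : ℝ≥0∞)} ∩ E) ∆ (B r ∩ E) :=
      ae_all_iff.2 fun r => measure_eq_zero_iff_ae_notMem.1 (hPB r)
    filter_upwards [hae] with ω hω hE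
    have hiff : ∀ r : ℚ, ω ∈ B r ↔ σ ω < (Real.toNNReal r : ℝ≥0∞) := by
      intro r
      have := hω r
      simp only [mem_symmDiff, mem_inter_iff, mem_ofPred_eq, hE, and_true] at this
      tauto
    apply le_antisymm
    · refine le_iInf fun r => ?_
      split_ifs with hr
      · exact ((hiff r).1 hr).le
      · exact le_top
    · refine le_of_forall_gt fun a ha => ?_
      obtain ⟨r, -, h1, h2⟩ := ENNReal.lt_iff_exists_rat_btwn.1 ha
      refine (iInf_le _ r).trans_lt ?_
      rwa [if_pos ((hiff r).2 h1)]

theorem honest_times_in_jumping_filtration_are_thin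
    [m𝒢 : MeasurableSpace Ω] (P : Measure Ω) [IsProbabilityMeasure P]
    (F : ℝ≥0 → MeasurableSpace Ω) (hUC : UsualConditions P F)
    (θ : ℕ → Ω → ℝ≥0∞) (hθ : ∀ n, IsStoppingTimeE F (θ n))
    (hθ0 : θ 0 = fun _ => 0)
    (hθtop : ∀ᵐ ω ∂P, (∀ n, θ n ω ≤ θ (n + 1) ω) ∧ (⨆ n, θ n ω) = ∞)
    (hjump : ∀ n : ℕ, ∀ t : ℝ≥0, 0 < t →
      (∀ A : Set Ω, MeasurableSet[F t] A →
        ∃ B : Set Ω, MeasurableSet[stoppingSigma F (θ n) (hθ n)] B ∧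
          P ((A ∩ {ω | θ n ω ≤ (t : ℝ≥0∞) ∧ (t : ℝ≥0∞) < θ (n + 1) ω}) ∆
             (B ∩ {ω | θ n ω ≤ (t : ℝ≥0∞) ∧ (t : ℝ≥0∞) < θ (n + 1) ω})) = 0) ∧
      (∀ B : Set Ω, MeasurableSet[stoppingSigma F (θ n) (hθ n)] B →
        ∃ A : Set Ω, MeasurableSet[F t] A ∧
          P ((A ∩ {ω | θ n ω ≤ (t : ℝ≥0∞) ∧ (t : ℝ≥0∞) < θ (n + 1) ω}) ∆
             (B ∩ {ω | θ n ω ≤ (t : ℝ≥0∞) ∧ (t : ℝ≥0∞) < θ (n + 1) ω})) = 0)) :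
    ∀ τ : Ω → ℝ≥0∞, Measurable τ → IsHonestTime P F τ → IsThinTime P F τ := by
  classical
  intro τ _ hτ
  obtain ⟨hF, hle, -, -⟩ := hUC
  have key : ∀ p : ℕ × ℚ, ∃ S : Ω → ℝ≥0∞, IsStoppingTimeE F S ∧
      ∀ᵐ ω ∂P, θ p.1 ω ≤ τ ω → τ ω < (Real.toNNReal p.2 : ℝ≥0∞) →
        (Real.toNNReal p.2 : ℝ≥0∞) < θ (p.1 + 1) ω → τ ω = S ω := by
    rintro ⟨n, q⟩
    rcases eq_or_lt_of_le (zero_le : 0 ≤ Real.toNNReal q) with hq | hq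
    · exact ⟨θ n, hθ n, ae_of_all _ fun ω _ h => by simp [← hq] at h⟩
    · obtain ⟨σ, hσ, hτσ⟩ := hτ _ hq
      obtain ⟨σ', hσ', hae⟩ := exists_measurable_ae_eq_on P _ _ _ (hjump n _ hq).1 hσ
      refine ⟨_, isStoppingTimeE_of_measurable hF hle (hθ n) hσ', ?_⟩
      filter_upwards [hτσ, hae] with ω h1 h2 h3 h4 h5
      have h6 : τ ω = σ' ω := (h1 h4).trans (h2 ⟨h3.trans h4.le, h5⟩)
      rw [← h6, if_pos h3]
  choose S hS hSae using key
  obtain ⟨f, hf⟩ := exists_surjective_nat (ℕ × ℚ)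
  obtain ⟨T, hT, hdisj, hcov⟩ := exists_disjointGraphs P hF fun n => hS (f n)
  refine ⟨T, hT, hdisj, ?_⟩
  filter_upwards [hθtop, ae_all_iff.2 hSae] with ω h1 h2 hfin
  -- `n + 1` is the first index at which `θ` exceeds `τ`
  have hex : ∃ k, τ ω < θ k ω := lt_iSup_iff.1 (h1.2 ▸ hfin)
  obtain ⟨n, hn, hn'⟩ : ∃ n, θ n ω ≤ τ ω ∧ τ ω < θ (n + 1) ω := by
    rcases hk : Nat.find hex with _ | n
    · have := Nat.find_spec hex
      rw [hk, hθ0] at this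
      exact absurd this not_lt_zero
    · refine ⟨n, not_lt.1 (Nat.find_min hex (by omega)), ?_⟩
      have := Nat.find_spec hex
      rwa [hk] at this
  obtain ⟨q, -, hq1, hq2⟩ := ENNReal.lt_iff_exists_rat_btwn.1 hn'
  have hSτ := h2 (n, q) hn hq1 hq2
  obtain ⟨k, hk⟩ := hf (n, q)
  obtain ⟨m, hm⟩ := hcov ω k
  exact ⟨m, by rw [hSτ, ← hk, hm]⟩

end
end
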